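/- Assume A(iω) is invertible for every ω ∈ ℝ. Let ω̂ ∈ ℝ and set ξ̂ := ‖G(iω̂)‖ (operator norm from ℂ^{n_u} to ℂ^{n_y} with Euclidean norms, i.e. the largest singular value). Assume ξ̂ > 0, that D_ξ̂ := DᵀD − ξ̂²I is invertible, and that ω̂ is a global maximizer: ‖G(iω)‖ ≤ ξ̂ for all ω ∈ ℝ (so ξ̂ equals the H∞ norm of G, attained at ω̂). Then, with h(ω) := det H_ξ̂(iω) (a real-valued function of ω ∈ ℝ), both h(ω̂) = 0 and h′(ω̂) = 0, where h′ denotes the derivative with respect to the real variable ω. -/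

import Mathlib

open Matrix Complex

noncomputable section

variable {n nu ny m : ℕ}

/-- `D_ξ = Dᵀ D − ξ² I`. -/
def Dxi (D : Matrix (Fin ny) (Fin nu) ℝ) (ξ : ℝ) : Matrix (Fin nu) (Fin nu) ℝ :=
  Dᵀ * D - ξ ^ 2 • (1 : Matrix (Fin nu) (Fin nu) ℝ)

/-- `(Dᵀ)_ξ = D Dᵀ − ξ² I`, the matrix denoted `D_ξ^{-T}`-inverse base in the paper
(the only dimensionally consistent reading of the `(2,1)` block of `M₀`).
Note that it is invertible iff `D_ξ` is (for `ξ ≠ 0`), since `DᵀD` and `DDᵀ` have the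
same nonzero eigenvalues. -/
def DxiT (D : Matrix (Fin ny) (Fin nu) ℝ) (ξ : ℝ) : Matrix (Fin ny) (Fin ny) ℝ :=
  D * Dᵀ - ξ ^ 2 • (1 : Matrix (Fin ny) (Fin ny) ℝ)

/-- The block matrix `M₀`. -/
def Mzero (A0 : Matrix (Fin n) (Fin n) ℝ) (B : Matrix (Fin n) (Fin nu) ℝ)
    (C : Matrix (Fin ny) (Fin n) ℝ) (D : Matrix (Fin ny) (Fin nu) ℝ) (ξ : ℝ) :
    Matrix (Fin n ⊕ Fin n) (Fin n ⊕ Fin n) ℝ :=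
  fromBlocks (A0 - B * (Dxi D ξ)⁻¹ * Dᵀ * C) (-(B * (Dxi D ξ)⁻¹ * Bᵀ))
    (ξ ^ 2 • (Cᵀ * (DxiT D ξ)⁻¹ * C)) (-A0ᵀ + Cᵀ * D * (Dxi D ξ)⁻¹ * Bᵀ)

/-- The block matrix `Mᵢ` for `1 ≤ i ≤ m`. -/
def Mpos (Ai : Matrix (Fin n) (Fin n) ℝ) : Matrix (Fin n ⊕ Fin n) (Fin n ⊕ Fin n) ℝ :=
  fromBlocks Ai 0 0 0

/-- The block matrix `M₋ᵢ` for `1 ≤ i ≤ m`. -/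
def Mneg (Ai : Matrix (Fin n) (Fin n) ℝ) : Matrix (Fin n ⊕ Fin n) (Fin n ⊕ Fin n) ℝ :=
  fromBlocks 0 0 0 (-Aiᵀ)

/-- `H_ξ(λ) = λI − M₀ − Σᵢ (Mᵢ e^{−λτᵢ} + M₋ᵢ e^{λτᵢ})`. -/
def Hxi (A0 : Matrix (Fin n) (Fin n) ℝ) (A : Fin m → Matrix (Fin n) (Fin n) ℝ)
    (B : Matrix (Fin n) (Fin nu) ℝ) (C : Matrix (Fin ny) (Fin n) ℝ)
    (D : Matrix (Fin ny) (Fin nu) ℝ) (τ : Fin m → ℝ) (ξ : ℝ) (lam : ℂ) :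
    Matrix (Fin n ⊕ Fin n) (Fin n ⊕ Fin n) ℂ :=
  lam • (1 : Matrix (Fin n ⊕ Fin n) (Fin n ⊕ Fin n) ℂ)
    - (Mzero A0 B C D ξ).map Complex.ofReal
    - ∑ i : Fin m, (Complex.exp (-lam * (τ i : ℂ)) • (Mpos (A i)).map Complex.ofReal
        + Complex.exp (lam * (τ i : ℂ)) • (Mneg (A i)).map Complex.ofReal)

/-- `A(λ) = λI − A₀ − Σᵢ Aᵢ e^{−λτᵢ}`. -/
def Amat (A0 : Matrix (Fin n) (Fin n) ℝ) (A : Fin m → Matrix (Fin n) (Fin n) ℝ)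
    (τ : Fin m → ℝ) (lam : ℂ) : Matrix (Fin n) (Fin n) ℂ :=
  lam • (1 : Matrix (Fin n) (Fin n) ℂ) - A0.map Complex.ofReal
    - ∑ i : Fin m, Complex.exp (-lam * (τ i : ℂ)) • (A i).map Complex.ofReal

/-- The transfer function `G(λ) = C A(λ)⁻¹ B + D`. -/
def Gmat (A0 : Matrix (Fin n) (Fin n) ℝ) (A : Fin m → Matrix (Fin n) (Fin n) ℝ)
    (B : Matrix (Fin n) (Fin nu) ℝ) (C : Matrix (Fin ny) (Fin n) ℝ)
    (D : Matrix (Fin ny) (Fin nu) ℝ) (τ : Fin m → ℝ) (lam : ℂ) :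
    Matrix (Fin ny) (Fin nu) ℂ :=
  C.map Complex.ofReal * (Amat A0 A τ lam)⁻¹ * B.map Complex.ofReal + D.map Complex.ofReal

/-- `τ_max`, the maximum of the delays. -/
def tauMax [NeZero m] (τ : Fin m → ℝ) : ℝ :=
  Finset.univ.sup' Finset.univ_nonempty τ

/-- `λ` is an eigenvalue of the infinite-dimensional operator `L_ξ`: there is a continuously
differentiable, not identically zero function `u : [−τ_max, τ_max] → ℂ^{2n}` with
`u′(t) = λ u(t)` on the interval and `u′(0) = M₀ u(0) + Σᵢ (Mᵢ u(−τᵢ) + M₋ᵢ u(τᵢ))`. -/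
def IsEigLxi [NeZero m] (A0 : Matrix (Fin n) (Fin n) ℝ) (A : Fin m → Matrix (Fin n) (Fin n) ℝ)
    (B : Matrix (Fin n) (Fin nu) ℝ) (C : Matrix (Fin ny) (Fin n) ℝ)
    (D : Matrix (Fin ny) (Fin nu) ℝ) (τ : Fin m → ℝ) (ξ : ℝ) (lam : ℂ) : Prop :=
  ∃ u : ℝ → (Fin n ⊕ Fin n → ℂ),
    (∀ t ∈ Set.Icc (-(tauMax τ)) (tauMax τ),
      HasDerivWithinAt u (lam • u t) (Set.Icc (-(tauMax τ)) (tauMax τ)) t) ∧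
    (∃ t ∈ Set.Icc (-(tauMax τ)) (tauMax τ), u t ≠ 0) ∧
    lam • u 0 = (Mzero A0 B C D ξ).map Complex.ofReal *ᵥ u 0
      + ∑ i : Fin m, ((Mpos (A i)).map Complex.ofReal *ᵥ u (-(τ i))
          + (Mneg (A i)).map Complex.ofReal *ᵥ u (τ i))


/-- The operator norm of a complex matrix, viewed as a linear map between Euclidean spaces
(i.e. its largest singular value). -/
def l2OpNorm {a b : ℕ} (M : Matrix (Fin a) (Fin b) ℂ) : ℝ :=
  ‖LinearMap.toContinuousLinearMap (Matrix.toEuclideanLin M)‖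

/-!
For real `ω`, the matrix `H_ξ(iω)` is a perturbation, through `D_ξ⁻¹`, of the block triangular
pencil of the system driving its own adjoint. That series connection has transfer matrix
`G(iω)ᴴ G(iω)`, so the Weinstein–Aronszajn identity gives
`(-1) ^ (n + n_u) * det D_ξ * det H_ξ(iω) = |det A(iω)|² * det (ξ² I - G(iω)ᴴ G(iω))`.
When `‖G(iω)‖ ≤ ξ` the last determinant is that of a positive semidefinite matrix, and it vanishes
when `‖G(iω)‖ = ξ`. At a maximizer of the norm, a nonzero multiple of the differentiable function
`det H_ξ(iω)` therefore has the minimum value zero.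
-/

section BlockDeterminant

variable {R N N₁ N₂ U Y Z : Type*} [CommRing R] [Fintype N] [DecidableEq N]
  [Fintype N₁] [DecidableEq N₁] [Fintype N₂] [DecidableEq N₂] [Fintype Y]

/-- `C A⁻¹ B + D` is the transfer matrix of the system `(A, B, C, D)`; the left-hand side realizes
the series connection in which the output of system 1 drives system 2. -/
theorem transfer_series {A₁ : Matrix N₁ N₁ R} {A₂ : Matrix N₂ N₂ R} (B₁ : Matrix N₁ U R)
    (C₁ : Matrix Y N₁ R) (D₁ : Matrix Y U R) (B₂ : Matrix N₂ Y R) (C₂ : Matrix Z N₂ R)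
    (D₂ : Matrix Z Y R) (hA₁ : IsUnit A₁) (hA₂ : IsUnit A₂) :
    fromCols (D₂ * C₁) C₂ * (fromBlocks A₁ 0 (-(B₂ * C₁)) A₂)⁻¹ * fromRows B₁ (B₂ * D₁) + D₂ * D₁ =
      (C₂ * A₂⁻¹ * B₂ + D₂) * (C₁ * A₁⁻¹ * B₁ + D₁) := by
  rw [inv_fromBlocks_zero₁₂_of_isUnit_iff _ _ _ (iff_of_true hA₁ hA₂), fromCols_mul_fromBlocks,
    fromCols_mul_fromRows]
  simp only [Matrix.add_mul, Matrix.mul_add, Matrix.mul_assoc, Matrix.mul_neg, Matrix.neg_mul,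
    Matrix.mul_zero, zero_add, neg_neg]
  abel

variable [Fintype U] [DecidableEq U]

theorem det_mul_det_add_mul_inv_mul {P : Matrix N N R} {Q : Matrix U U R} (K : Matrix N U R)
    (L : Matrix U N R) (hP : IsUnit P) (hQ : IsUnit Q) :
    Q.det * (P + K * Q⁻¹ * L).det = P.det * (L * P⁻¹ * K + Q).det := by
  have hPdet := (isUnit_iff_isUnit_det P).mp hP
  have hQdet := (isUnit_iff_isUnit_det Q).mp hQ
  calc Q.det * (P + K * Q⁻¹ * L).det
      = Q.det * (P.det * (1 + Q⁻¹ * L * P⁻¹ * K).det) := by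
        rw [Matrix.mul_assoc K, det_add_mul _ _ hPdet]
    _ = P.det * (Q * (1 + Q⁻¹ * L * P⁻¹ * K)).det := by rw [det_mul]; ring
    _ = P.det * (L * P⁻¹ * K + Q).det := by
        rw [Matrix.mul_add, Matrix.mul_one, add_comm]
        simp only [Matrix.mul_assoc, mul_nonsing_inv_cancel_left _ _ hQdet]

theorem smul_inv_mul_sub_smul_one {F : Type*} [Field F] [DecidableEq Y] {X : Matrix Y U F}
    {W : Matrix U Y F} {z : F} (hz : z ≠ 0) (h : IsUnit (W * X - z • 1)) :
    z • (X * W - z • 1)⁻¹ = X * (W * X - z • 1)⁻¹ * W - 1 := by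
  have hdet := (isUnit_iff_isUnit_det _).mp h
  have hintertwine : (X * W - z • 1) * X = X * (W * X - z • 1) := by
    simp only [Matrix.sub_mul, Matrix.mul_sub, Matrix.mul_assoc, Matrix.smul_mul, Matrix.mul_smul,
      Matrix.one_mul, Matrix.mul_one]
  have hmul : (X * W - z • 1) * (X * (W * X - z • 1)⁻¹ * W - 1) = z • 1 := by
    rw [Matrix.mul_sub, ← Matrix.mul_assoc, ← Matrix.mul_assoc, hintertwine,
      mul_nonsing_inv_cancel_right _ _ hdet, Matrix.mul_one, sub_sub_cancel]
  have hinv : (X * W - z • 1)⁻¹ = z⁻¹ • (X * (W * X - z • 1)⁻¹ * W - 1) :=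
    inv_eq_right_inv (by rw [Matrix.mul_smul, hmul, inv_smul_smul₀ hz])
  rw [hinv, smul_inv_smul₀ hz]

/-- The value at an imaginary frequency of the Hamiltonian matrix pencil at level `z = ξ²` of a
system `(A, B, C, D)`. Here `A` is the value of the characteristic matrix `λ I - A₀ - ⋯`, and the
pencil is written as a perturbation of the series connection of the system with its adjoint. -/
def hamiltonian [StarRing R] (A : Matrix N N R) (B : Matrix N U R) (C : Matrix Y N R)
    (D : Matrix Y U R) (z : R) : Matrix (N ⊕ N) (N ⊕ N) R :=
  fromBlocks A 0 (Cᴴ * C) (-Aᴴ) +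
    fromRows B (-(Cᴴ * D)) * (Dᴴ * D - z • 1)⁻¹ * fromCols (Dᴴ * C) Bᴴ

theorem det_mul_det_hamiltonian [StarRing R] {A : Matrix N N R} (B : Matrix N U R)
    (C : Matrix Y N R) (D : Matrix Y U R) {z : R} (hA : IsUnit A)
    (hD : IsUnit (Dᴴ * D - z • 1)) :
    (Dᴴ * D - z • 1).det * (hamiltonian A B C D z).det =
      (-1) ^ Fintype.card N * (A.det * star A.det) *
        ((C * A⁻¹ * B + D)ᴴ * (C * A⁻¹ * B + D) - z • 1).det := by
  have hA' : IsUnit Aᴴ := (isUnit_conjTranspose A).mpr hA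
  have hP : IsUnit (fromBlocks A 0 (Cᴴ * C) (-Aᴴ)) := isUnit_fromBlocks_zero₁₂.mpr ⟨hA, hA'.neg⟩
  have hdetP : (fromBlocks A 0 (Cᴴ * C) (-Aᴴ)).det =
      (-1) ^ Fintype.card N * (A.det * star A.det) := by
    rw [det_fromBlocks_zero₁₂, det_neg, det_conjTranspose, mul_left_comm]
  have hinv : (-Aᴴ)⁻¹ = -(Aᴴ)⁻¹ :=
    inv_eq_left_inv <| by
      rw [neg_mul_neg, nonsing_inv_mul _ ((isUnit_iff_isUnit_det _).mp hA')]
  have hadjoint : Bᴴ * (-Aᴴ)⁻¹ * -Cᴴ + Dᴴ = (C * A⁻¹ * B + D)ᴴ := by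
    simp only [hinv, Matrix.mul_neg, Matrix.neg_mul, neg_neg, conjTranspose_add,
      conjTranspose_mul, conjTranspose_nonsing_inv, Matrix.mul_assoc]
  have hseries := transfer_series B C D (-Cᴴ) Bᴴ Dᴴ hA hA'.neg
  rw [hadjoint, Matrix.neg_mul, neg_neg, Matrix.neg_mul] at hseries
  rw [hamiltonian, det_mul_det_add_mul_inv_mul _ _ hP hD, hdetP, ← hseries, add_sub_assoc]

end BlockDeterminant

section SingularValues

open scoped Matrix.Norms.L2Operator MatrixOrder ComplexOrder

variable {p q : Type*} [Fintype p] [Fintype q] [DecidableEq q]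

theorem posSemidef_sq_smul_one_sub_conjTranspose_mul_self {G : Matrix p q ℂ} {r : ℝ}
    (h : ‖G‖ ≤ r) : (r ^ 2 • (1 : Matrix q q ℂ) - Gᴴ * G).PosSemidef := by
  rw [← Matrix.le_iff, ← Algebra.algebraMap_eq_smul_one]
  calc Gᴴ * G ≤ algebraMap ℝ _ ‖Gᴴ * G‖ :=
        IsSelfAdjoint.le_algebraMap_norm_self (isHermitian_conjTranspose_mul_self G)
    _ ≤ algebraMap ℝ _ (r ^ 2) := by
        rw [l2_opNorm_conjTranspose_mul_self, ← sq]
        gcongr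

theorem det_norm_sq_smul_one_sub_conjTranspose_mul_self [Nonempty q] (G : Matrix p q ℂ) :
    (‖G‖ ^ 2 • (1 : Matrix q q ℂ) - Gᴴ * G).det = 0 := by
  have hmem : ‖Gᴴ * G‖ ∈ spectrum ℝ (Gᴴ * G) :=
    CStarAlgebra.norm_mem_spectrum_of_nonneg (posSemidef_conjTranspose_mul_self G).nonneg
  rwa [l2_opNorm_conjTranspose_mul_self, ← sq, spectrum.mem_iff, isUnit_iff_isUnit_det,
    isUnit_iff_ne_zero, not_not, Algebra.algebraMap_eq_smul_one] at hmem

theorem l2OpNorm_eq_norm {a b : ℕ} (M : Matrix (Fin a) (Fin b) ℂ) : l2OpNorm M = ‖M‖ :=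
  rfl

end SingularValues

section Complexification

variable {p q r : Type*}

theorem map_ofReal_transpose (M : Matrix p q ℝ) : Mᵀ.map ofReal = (M.map ofReal)ᴴ := by
  ext
  simp

theorem map_ofReal_mul [Fintype q] (M : Matrix p q ℝ) (N : Matrix q r ℝ) :
    (M * N).map ofReal = M.map ofReal * N.map ofReal :=
  Matrix.map_mul (f := ofRealHom)

theorem det_map_ofReal [Fintype p] [DecidableEq p] (M : Matrix p p ℝ) :
    (M.map ofReal).det = M.det :=
  (RingHom.map_det ofRealHom M).symm

theorem map_ofReal_inv [Fintype p] [DecidableEq p] (M : Matrix p p ℝ) :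
    M⁻¹.map ofReal = (M.map ofReal)⁻¹ := by
  have hadj : M.adjugate.map ofReal = (M.map ofReal).adjugate := RingHom.map_adjugate ofRealHom M
  simp only [Matrix.inv_def, Ring.inverse_eq_inv', det_map_ofReal, ← hadj]
  ext
  simp

end Complexification

section DelaySystem

open scoped Topology

variable (A0 : Matrix (Fin n) (Fin n) ℝ) (A : Fin m → Matrix (Fin n) (Fin n) ℝ)
  (B : Matrix (Fin n) (Fin nu) ℝ) (C : Matrix (Fin ny) (Fin n) ℝ)
  (D : Matrix (Fin ny) (Fin nu) ℝ) (τ : Fin m → ℝ)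

theorem continuous_Amat : Continuous (Amat A0 A τ) := by
  unfold Amat
  fun_prop

theorem differentiable_det_Hxi (ξ : ℝ) :
    Differentiable ℂ fun lam => (Hxi A0 A B C D τ ξ lam).det := by
  simp only [det_apply, Hxi, Matrix.sub_apply, Matrix.sum_apply, Matrix.add_apply,
    Matrix.smul_apply]
  fun_prop

theorem neg_conjTranspose_Amat_I_mul (ω : ℝ) :
    -(Amat A0 A τ (I * ω))ᴴ = (I * ω) • (1 : Matrix (Fin n) (Fin n) ℂ) + A0ᵀ.map ofReal
      + ∑ i : Fin m, exp (I * ω * τ i) • (A i)ᵀ.map ofReal := by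
  simp only [Amat, conjTranspose_sub, conjTranspose_sum, conjTranspose_smul,
    map_ofReal_transpose, conjTranspose_one, star_def, ← exp_conj, map_mul, map_neg, conj_I,
    conj_ofReal, neg_mul, neg_neg, neg_smul]
  abel

theorem map_ofReal_Dxi (ξ : ℝ) :
    (Dxi D ξ).map ofReal = (D.map ofReal)ᴴ * D.map ofReal - ((ξ ^ 2 : ℝ) : ℂ) • 1 := by
  rw [← map_ofReal_transpose, ← map_ofReal_mul, Dxi]
  ext i j
  simp [Matrix.one_apply, apply_ite ofReal]

theorem Mzero_eq_fromBlocks_sub {ξ : ℝ} (hξ : ξ ≠ 0) (hD : IsUnit (Dxi D ξ)) :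
    Mzero A0 B C D ξ = fromBlocks A0 0 (-(Cᵀ * C)) (-A0ᵀ) -
      fromRows B (-(Cᵀ * D)) * (Dxi D ξ)⁻¹ * fromCols (Dᵀ * C) Bᵀ := by
  have hDxiT : ξ ^ 2 • (DxiT D ξ)⁻¹ = D * (Dxi D ξ)⁻¹ * Dᵀ - 1 :=
    smul_inv_mul_sub_smul_one (pow_ne_zero 2 hξ) hD
  have hlowerLeft : ξ ^ 2 • (Cᵀ * (DxiT D ξ)⁻¹ * C) =
      Cᵀ * D * (Dxi D ξ)⁻¹ * Dᵀ * C - Cᵀ * C := by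
    rw [← Matrix.smul_mul, ← Matrix.mul_smul, hDxiT]
    simp only [Matrix.mul_sub, Matrix.sub_mul, Matrix.mul_assoc, Matrix.mul_one]
  rw [Mzero, hlowerLeft, fromRows_mul, fromRows_mul_fromCols, sub_eq_add_neg (fromBlocks _ _ _ _),
    fromBlocks_neg, fromBlocks_add]
  congr 1 <;> simp only [Matrix.neg_mul, Matrix.mul_assoc] <;> abel

theorem Hxi_I_mul_eq_hamiltonian {ξ : ℝ} (hξ : ξ ≠ 0) (hD : IsUnit (Dxi D ξ)) (ω : ℝ) :
    Hxi A0 A B C D τ ξ (I * ω) =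
      hamiltonian (Amat A0 A τ (I * ω)) (B.map ofReal) (C.map ofReal) (D.map ofReal)
        (ξ ^ 2 : ℝ) := by
  have hpencil : (I * ω) • (1 : Matrix (Fin n ⊕ Fin n) (Fin n ⊕ Fin n) ℂ)
        - (fromBlocks A0 0 (-(Cᵀ * C)) (-A0ᵀ)).map ofReal
        - ∑ i : Fin m, (exp (-(I * ω) * τ i) • (Mpos (A i)).map ofReal
          + exp (I * ω * τ i) • (Mneg (A i)).map ofReal) =
      fromBlocks (Amat A0 A τ (I * ω)) 0 ((C.map ofReal)ᴴ * C.map ofReal)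
        (-(Amat A0 A τ (I * ω))ᴴ) := by
    rw [neg_conjTranspose_Amat_I_mul, ← map_ofReal_transpose, ← map_ofReal_mul]
    ext (i | i) (j | j) <;> simp [Amat, Mpos, Mneg, Matrix.sum_apply, Matrix.one_apply]
  have hfeedback : (fromRows B (-(Cᵀ * D)) * (Dxi D ξ)⁻¹ * fromCols (Dᵀ * C) Bᵀ).map ofReal =
      fromRows (B.map ofReal) (-((C.map ofReal)ᴴ * D.map ofReal)) *
        ((D.map ofReal)ᴴ * D.map ofReal - ((ξ ^ 2 : ℝ) : ℂ) • 1)⁻¹ *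
        fromCols ((D.map ofReal)ᴴ * C.map ofReal) (B.map ofReal)ᴴ := by
    have hneg : (-(Cᵀ * D)).map ofReal = -(Cᵀ * D).map ofReal := by ext; simp
    simp only [← map_ofReal_Dxi, map_ofReal_mul, map_ofReal_inv, fromRows_map, fromCols_map,
      hneg, map_ofReal_transpose]
  rw [hamiltonian, ← hpencil, ← hfeedback, Hxi, Mzero_eq_fromBlocks_sub _ _ _ _ hξ hD,
    Matrix.map_sub _ ofReal_sub]
  abel

variable {A0 A B C D τ} {ξ ω : ℝ}

theorem neg_one_pow_mul_det_Dxi_ne_zero (hD : IsUnit (Dxi D ξ)) (k : ℕ) :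
    (-1) ^ k * (Dxi D ξ).det ≠ 0 :=
  mul_ne_zero (pow_ne_zero k (neg_ne_zero.mpr one_ne_zero))
    ((isUnit_iff_isUnit_det _).mp hD).ne_zero

theorem mul_det_Hxi_I_mul (hξ : ξ ≠ 0) (hD : IsUnit (Dxi D ξ))
    (hA : IsUnit (Amat A0 A τ (I * ω))) :
    (((-1) ^ (n + nu) * (Dxi D ξ).det : ℝ) : ℂ) * (Hxi A0 A B C D τ ξ (I * ω)).det =
      normSq (Amat A0 A τ (I * ω)).det *
        (ξ ^ 2 • 1 - (Gmat A0 A B C D τ (I * ω))ᴴ * Gmat A0 A B C D τ (I * ω)).det := by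
  have hDdet : ((D.map ofReal)ᴴ * D.map ofReal - ((ξ ^ 2 : ℝ) : ℂ) • 1).det =
      ((Dxi D ξ).det : ℂ) := by
    rw [← map_ofReal_Dxi, det_map_ofReal]
  have hDunit : IsUnit ((D.map ofReal)ᴴ * D.map ofReal - ((ξ ^ 2 : ℝ) : ℂ) • 1) := by
    rw [isUnit_iff_isUnit_det, hDdet]
    exact ((isUnit_iff_isUnit_det _).mp hD).map ofRealHom
  have hdet := det_mul_det_hamiltonian (B.map ofReal) (C.map ofReal) (D.map ofReal) hA hDunit
  rw [← Hxi_I_mul_eq_hamiltonian _ _ _ _ _ _ hξ hD, hDdet, ← Gmat, Fintype.card_fin, star_def,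
    mul_conj, coe_smul] at hdet
  have hsign : (-1 : ℂ) ^ n * (-1) ^ n = 1 := by rw [← mul_pow, neg_one_mul, neg_neg, one_pow]
  rw [← neg_sub (_ * _), det_neg, Fintype.card_fin]
  push_cast
  linear_combination (-1) ^ (n + nu) * hdet + normSq (Amat A0 A τ (I * ω)).det * (-1) ^ nu *
    ((Gmat A0 A B C D τ (I * ω))ᴴ * Gmat A0 A B C D τ (I * ω) - ξ ^ 2 • 1).det * hsign

theorem mul_det_Hxi_I_mul_nonneg (hξ : ξ ≠ 0) (hD : IsUnit (Dxi D ξ))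
    (hA : IsUnit (Amat A0 A τ (I * ω))) (hG : l2OpNorm (Gmat A0 A B C D τ (I * ω)) ≤ ξ) :
    0 ≤ (-1) ^ (n + nu) * (Dxi D ξ).det * (Hxi A0 A B C D τ ξ (I * ω)).det.re := by
  have hgap := (posSemidef_sq_smul_one_sub_conjTranspose_mul_self hG).det_nonneg
  rw [← re_ofReal_mul, mul_det_Hxi_I_mul hξ hD hA, re_ofReal_mul]
  exact mul_nonneg (normSq_nonneg _) (nonneg_iff.mp hgap).1

theorem det_Hxi_I_mul_eq_zero (hξ : ξ ≠ 0) (hD : IsUnit (Dxi D ξ))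
    (hA : IsUnit (Amat A0 A τ (I * ω))) (hG : ξ = l2OpNorm (Gmat A0 A B C D τ (I * ω))) :
    (Hxi A0 A B C D τ ξ (I * ω)).det = 0 := by
  have hnonempty : Nonempty (Fin nu) := by
    by_contra! hempty
    exact hξ (by rw [hG, l2OpNorm, Subsingleton.elim (Gmat A0 A B C D τ (I * ω)) 0]; simp)
  have hgap : (ξ ^ 2 • 1 - (Gmat A0 A B C D τ (I * ω))ᴴ * Gmat A0 A B C D τ (I * ω)).det = 0 := by
    rw [hG, l2OpNorm_eq_norm]
    exact det_norm_sq_smul_one_sub_conjTranspose_mul_self _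
  have hdet := mul_det_Hxi_I_mul (B := B) (C := C) hξ hD hA
  rw [hgap, mul_zero] at hdet
  exact (mul_eq_zero.mp hdet).resolve_left
    (ofReal_ne_zero.mpr (neg_one_pow_mul_det_Dxi_ne_zero hD _))

theorem det_Hxi_and_deriv_vanish_at_peak_general
    (hA : IsUnit (Amat A0 A τ (I * ω)))
    (hmax : IsLocalMax (fun ω : ℝ => l2OpNorm (Gmat A0 A B C D τ (I * ω))) ω)
    (hξ : ξ = l2OpNorm (Gmat A0 A B C D τ (I * ω))) (hpos : 0 < ξ) (hD : IsUnit (Dxi D ξ)) :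
    (Hxi A0 A B C D τ ξ (I * ω)).det = 0 ∧
      HasDerivAt (fun ω : ℝ => (Hxi A0 A B C D τ ξ (I * ω)).det.re) 0 ω := by
  set h : ℝ → ℝ := fun t => (Hxi A0 A B C D τ ξ (I * t)).det.re
  have hzero := det_Hxi_I_mul_eq_zero hpos.ne' hD hA hξ
  have hinvertible : ∀ᶠ t : ℝ in 𝓝 ω, IsUnit (Amat A0 A τ (I * t)) := by
    have hcont : Continuous fun t : ℝ => (Amat A0 A τ (I * t)).det :=
      ((continuous_Amat A0 A τ).comp (by fun_prop)).matrix_det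
    simp only [isUnit_iff_isUnit_det, isUnit_iff_ne_zero] at hA ⊢
    exact hcont.continuousAt.eventually_ne hA
  have hmin : IsLocalMin (fun t => (-1) ^ (n + nu) * (Dxi D ξ).det * h t) ω := by
    filter_upwards [hinvertible, hmax] with t hAt hGt
    simpa [h, hzero] using mul_det_Hxi_I_mul_nonneg hpos.ne' hD hAt (hGt.trans_eq hξ.symm)
  have hdiff : DifferentiableAt ℝ h ω :=
    reCLM.differentiableAt.comp ω <|
      ((differentiable_det_Hxi A0 A B C D τ ξ).restrictScalars ℝ).differentiableAt.comp ω
        (by fun_prop)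
  have hderiv : deriv h ω = 0 := by
    have hmul := hmin.deriv_eq_zero
    rw [deriv_const_mul_field] at hmul
    exact (mul_eq_zero.mp hmul).resolve_left (neg_one_pow_mul_det_Dxi_ne_zero hD _)
  exact ⟨hzero, hderiv ▸ hdiff.hasDerivAt⟩

end DelaySystem

/-- if the H∞ norm `ξ̂` of `G` is positive, attained at `ω̂`, and `D_ξ̂` is
invertible, then the real-valued function `h(ω) = det H_ξ̂(iω)` satisfies `h(ω̂) = 0` and
`h′(ω̂) = 0`. -/
theorem det_Hxi_and_deriv_vanish_at_peak [NeZero n] [NeZero nu] [NeZero ny] [NeZero m]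
    (A0 : Matrix (Fin n) (Fin n) ℝ) (A : Fin m → Matrix (Fin n) (Fin n) ℝ)
    (B : Matrix (Fin n) (Fin nu) ℝ) (C : Matrix (Fin ny) (Fin n) ℝ)
    (D : Matrix (Fin ny) (Fin nu) ℝ) (τ : Fin m → ℝ) (hτ : ∀ i, 0 ≤ τ i)
    (hA : ∀ ω : ℝ, IsUnit (Amat A0 A τ (Complex.I * ω)))
    (ωhat : ℝ) (ξhat : ℝ) (hξhat : ξhat = l2OpNorm (Gmat A0 A B C D τ (Complex.I * ωhat)))
    (hpos : 0 < ξhat) (hD : IsUnit (Dxi D ξhat))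
    (hmax : ∀ ω : ℝ, l2OpNorm (Gmat A0 A B C D τ (Complex.I * ω)) ≤ ξhat) :
    (Hxi A0 A B C D τ ξhat (Complex.I * ωhat)).det = 0 ∧
      deriv (fun ω : ℝ => ((Hxi A0 A B C D τ ξhat (Complex.I * ω)).det).re) ωhat = 0 := by
  have hlocal : IsLocalMax (fun ω : ℝ => l2OpNorm (Gmat A0 A B C D τ (I * ω))) ωhat :=
    .of_forall fun ω => (hmax ω).trans_eq hξhat
  exact (det_Hxi_and_deriv_vanish_at_peak_general (hA ωhat) hlocal hξhat hpos hD).imp_right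
    HasDerivAt.deriv
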